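/- Let R be a K-vector space, M the recursive brace operation on decorated trees, and ⋆ the induced Loday–Ronco product on decorated forests. For all decorated forests f_1, f_2, the product f_1 ⋆ f_2 equals the sum of all forests obtained by choosing, for each tree of f_2, either to insert it among the trees of f_1 (shuffle) or to graft it onto a vertex of a tree of f_1, in all possible ways preserving the left-to-right order of the trees of f_2 among themselves and the left-to-right order of the trees of f_1. -/

import Mathlib

/-! Common setup: `R`-decorated planar rooted trees, decorated forests,
the free module `R^𝒯` they span, and the Loday–Ronco product on `T(R^𝒯)`
induced by the recursive brace operation `M(B₊ˣ(f₁); f₂) = B₊ˣ(f₁ ⋆ f₂)`. -/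

/-- Planar rooted trees with vertices decorated by elements of `R`. -/
inductive PTree (R : Type*) : Type _
  | node : R → List (PTree R) → PTree R

section

variable (K : Type*) [Field K]
variable {R : Type*}

/-- All splittings of a list into a prefix and a suffix. -/
def splits {α : Type*} (l : List α) : List (List α × List α) :=
  (List.range (l.length + 1)).map fun i => (l.take i, l.drop i)

/-- All factorizations of a list into `k` (possibly empty) consecutive factors. -/
def splitsN {α : Type*} : ℕ → List α → List (List (List α))
  | 0, l => if l.isEmpty then [[]] else []
  | k + 1, l => (splits l).flatMap fun p => (splitsN k p.2).map fun r => p.1 :: r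

/-- Decorated forests: words of decorated trees. -/
abbrev Forest (R : Type*) := List (PTree R)

/-- `B₊ˣ` : grafting of a decorated forest onto a new root decorated by `x`. -/
def Bplus (x : R) (f : Forest R) : PTree R := PTree.node x f

variable (R)

/-- The space `R^𝒯` spanned by the decorated trees. -/
abbrev TreeMod := PTree R →₀ K

/-- The space `T(R^𝒯)` of decorated forests. -/
abbrev ForestMod := Forest R →₀ K

variable {R K}

/-- The element of `T(R^𝒯)` obtained from a word whose letters are linear
combinations of decorated trees, expanding multilinearly (in particular a word
containing the letter `0` gives `0`). -/
noncomputable def wordOf : List (TreeMod K R) → ForestMod K R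
  | [] => Finsupp.single ([] : Forest R) 1
  | a :: rest => a.sum fun t c => c • Finsupp.mapDomain (List.cons t) (wordOf rest)

/-- Extension `M(F;G)` of the brace operation to pairs of forests:
`M(1;1) = 0`, `M(1;s) = s` and `M(t;G) = M(t;G)` for a single tree `t`
(so `M(t;1) = t`), `M(F;G) = 0` if `F` has more than one tree. -/
noncomputable def MextF (Mh : PTree R → Forest R → TreeMod K R) : Forest R → Forest R → TreeMod K R
  | [], [] => 0
  | [], [s] => Finsupp.single s 1
  | [], _ :: _ :: _ => 0
  | [t], ys => Mh t ys
  | _ :: _ :: _, _ => 0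

/-- The Loday–Ronco product `X ⋆ Y = Σ_{k≥1} Σ_{X=X¹⋯X^k, Y=Y¹⋯Y^k}
M(X¹;Y¹)⋯M(X^k;Y^k)` built from a brace operation `Mh` on decorated trees
(with `1 ⋆ 1 = 1`; the terms with `k > |X| + |Y|` vanish, each containing the
letter `M(1;1) = 0`). -/
noncomputable def starRHS (Mh : PTree R → Forest R → TreeMod K R) : Forest R → Forest R → ForestMod K R
  | [], [] => Finsupp.single ([] : Forest R) 1
  | X, Y =>
    ((List.range (X.length + Y.length)).flatMap fun k =>
      (splitsN (k + 1) X).flatMap fun Xs =>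
        (splitsN (k + 1) Y).map fun Ys =>
          wordOf (List.zipWith (MextF Mh) Xs Ys)).sum

/-- `Mh` and `star` satisfy the defining recursion of the brace operation on
decorated trees: `M(B₊ˣ(f₁); f₂) = B₊ˣ(f₁ ⋆ f₂)` (with `B₊ˣ` extended linearly),
where `⋆` is the Loday–Ronco product built from `Mh`. -/
def IsTreeBrace (Mh : PTree R → Forest R → TreeMod K R)
    (star : Forest R → Forest R → ForestMod K R) : Prop :=
  (∀ (x : R) (f₁ f₂ : Forest R),
      Mh (Bplus x f₁) f₂ = Finsupp.mapDomain (Bplus x) (star f₁ f₂)) ∧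
  (∀ X Y : Forest R, star X Y = starRHS Mh X Y)

end

section

variable {K : Type*} [Field K] {R : Type*}

mutual
/-- All trees obtained by grafting the ordered trees `ss` onto vertices of `t`,
in all possible ways preserving the left-to-right order of the `ss` in the
resulting planar tree (each way listed once). -/
def graftT : PTree R → List (PTree R) → List (PTree R)
  | PTree.node x cs, ss => (graftF cs ss).map (PTree.node x)

/-- All forests obtained from the forest `cs` by choosing, for each tree of `ss`,
either to insert it among the trees of `cs` (shuffle) or to graft it onto a
vertex of one of the trees of `cs`, in all possible ways preserving the
left-to-right order of the trees of `ss` among themselves and the left-to-right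
order of the trees of `cs`. -/
def graftF : List (PTree R) → List (PTree R) → List (List (PTree R))
  | [], ss => [ss]
  | c :: cs, ss =>
      (splits ss).flatMap fun p =>
        (splits p.2).flatMap fun p2 =>
          (graftT c p2.1).flatMap fun c' =>
            (graftF cs p2.2).map fun tail => p.1 ++ c' :: tail
end

theorem sumFlat {α β M : Type*} [AddCommMonoid M] (l : List α) (f : α → List β) (g : β → M) :
    ((l.flatMap f).map g).sum = (l.map fun a => ((f a).map g).sum).sum := by
  induction l with
  | nil => simp
  | cons a l ih => simp [ih]

theorem sumFlat0 {α M : Type*} [AddCommMonoid M] (l : List α) (f : α → List M) :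
    (l.flatMap f).sum = (l.map fun a => (f a).sum).sum := by
  induction l with
  | nil => simp
  | cons a l ih => simp [ih]

theorem sumSwap {α β M : Type*} [AddCommMonoid M] (l : List α) (l' : List β) (g : α → β → M) :
    (l.map fun a => (l'.map fun b => g a b).sum).sum
      = (l'.map fun b => (l.map fun a => g a b).sum).sum := by
  induction l with
  | nil => simp
  | cons a l ih => simp [ih, List.sum_map_add]

theorem splits_nil {α : Type*} : splits ([] : List α) = [([], [])] := by
  simp [splits]

theorem splits_cons {α : Type*} (a : α) (l : List α) :
    splits (a :: l) = ([], a :: l) :: (splits l).map fun p => (a :: p.1, p.2) := by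
  simp [splits, List.range_succ_eq_map (n := l.length + 1), Function.comp_def]

theorem splits_len {α : Type*} (l : List α) (p : List α × List α) (hp : p ∈ splits l) :
    p.2.length ≤ l.length := by
  simp only [splits, List.mem_map] at hp
  obtain ⟨i, _, rfl⟩ := hp
  simp

/-- concatenation of a linear combination of trees with one of forests -/
noncomputable def lcons (a : TreeMod K R) : ForestMod K R →+ ForestMod K R where
  toFun w := a.sum fun t c => c • Finsupp.mapDomain (List.cons t) w
  map_zero' := by simp
  map_add' v w := by simp [Finsupp.mapDomain_add, Finsupp.sum_add]

theorem wordOf_cons (a : TreeMod K R) (r : List (TreeMod K R)) :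
    wordOf (a :: r) = lcons a (wordOf r) := rfl

theorem lcons_zero (w : ForestMod K R) : lcons 0 w = 0 := by
  simp [lcons]

theorem lcons_single (t : PTree R) (w : ForestMod K R) :
    lcons (Finsupp.single t 1) w = Finsupp.mapDomain (List.cons t) w := by
  simp [lcons]

theorem lcons_add (a b : TreeMod K R) (w : ForestMod K R) :
    lcons (a + b) w = lcons a w + lcons b w := by
  classical
  simp only [lcons, AddMonoidHom.coe_mk, ZeroHom.coe_mk]
  exact Finsupp.sum_add_index' (by simp) (by intros; rw [add_smul])

/-- sum of a list of basis elements -/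
noncomputable def sg (K : Type*) [Field K] {α : Type*} (l : List α) : α →₀ K :=
  (l.map fun g => Finsupp.single g (1 : K)).sum

theorem sg_cons {α : Type*} (a : α) (l : List α) :
    sg K (a :: l) = Finsupp.single a 1 + sg K l := by simp [sg]

theorem sg_flatMap {α β : Type*} (l : List α) (f : α → List β) :
    sg K (l.flatMap f) = (l.map fun a => sg K (f a)).sum := sumFlat _ _ _

theorem mapDomain_sg {α β : Type*} (f : α → β) (l : List α) :
    Finsupp.mapDomain f (sg K l) = sg K (l.map f) := by
  induction l with
  | nil => simp [sg]
  | cons a l ih => simp [sg_cons, Finsupp.mapDomain_add, ih]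

theorem lcons_sg (l : List (PTree R)) (m : List (Forest R)) :
    lcons (sg K l) (sg K m) = sg K (l.flatMap fun c => m.map fun tl => c :: tl) := by
  induction l with
  | nil => simp [sg, lcons_zero]
  | cons a l ih =>
    rw [sg_cons, lcons_add, ih, lcons_single, mapDomain_sg]
    simp [sg]

/-- the `k`-factor part of the Loday–Ronco product -/
noncomputable def Sk (Mh : PTree R → Forest R → TreeMod K R) (k : ℕ) (X Y : Forest R) :
    ForestMod K R :=
  ((splitsN k X).map fun Xs => ((splitsN k Y).map fun Ys =>
    wordOf (List.zipWith (MextF Mh) Xs Ys)).sum).sum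

theorem Sk_succ (Mh : PTree R → Forest R → TreeMod K R) (k : ℕ) (X Y : Forest R) :
    Sk Mh (k + 1) X Y = ((splits X).map fun p => ((splits Y).map fun q =>
      lcons (MextF Mh p.1 q.1) (Sk Mh k p.2 q.2)).sum).sum := by
  simp only [Sk, splitsN, sumFlat, List.map_map, Function.comp_def, List.zipWith_cons_cons,
    wordOf_cons, map_list_sum]
  congr 1
  refine List.map_congr_left fun p _ => ?_
  rw [sumSwap]

theorem Sk_zero (Mh : PTree R → Forest R → TreeMod K R) (X Y : Forest R) :
    Sk Mh 0 X Y = if X = [] ∧ Y = [] then Finsupp.single [] 1 else 0 := by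
  cases X <;> cases Y <;> simp [Sk, splitsN, wordOf]

/-- partial sums over the number of factors -/
noncomputable def Tn (Mh : PTree R → Forest R → TreeMod K R) (n : ℕ) (X Y : Forest R) :
    ForestMod K R :=
  ((List.range n).map fun k => Sk Mh k X Y).sum

theorem Tn_succ' (Mh : PTree R → Forest R → TreeMod K R) (n : ℕ) (X Y : Forest R) :
    Tn Mh (n + 1) X Y = Sk Mh 0 X Y + ((List.range n).map fun k => Sk Mh (k + 1) X Y).sum := by
  simp [Tn, List.range_succ_eq_map, Function.comp_def]

theorem Tn_succ (Mh : PTree R → Forest R → TreeMod K R) (n : ℕ) (X Y : Forest R) :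
    Tn Mh (n + 1) X Y = Sk Mh 0 X Y + ((splits X).map fun p => ((splits Y).map fun q =>
      lcons (MextF Mh p.1 q.1) (Tn Mh n p.2 q.2)).sum).sum := by
  rw [Tn_succ']
  congr 1
  simp only [Sk_succ, Tn, map_list_sum, List.map_map, Function.comp_def]
  rw [sumSwap]
  congr 1
  refine List.map_congr_left fun p _ => ?_
  rw [sumSwap]

theorem starRHS_eq (Mh : PTree R → Forest R → TreeMod K R) (X Y : Forest R) :
    starRHS Mh X Y = Tn Mh (X.length + Y.length + 1) X Y := by
  have key : ∀ n, ((List.range n).flatMap fun k =>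
      (splitsN (k + 1) X).flatMap fun Xs =>
        (splitsN (k + 1) Y).map fun Ys =>
          wordOf (List.zipWith (MextF Mh) Xs Ys)).sum
      = ((List.range n).map fun k => Sk Mh (k + 1) X Y).sum := by
    intro n
    simp only [sumFlat0, Sk]
  rw [Tn_succ', Sk_zero, ← key]
  cases X <;> cases Y <;> simp [starRHS]

theorem left_nil (Mh : PTree R → Forest R → TreeMod K R) (Y : Forest R)
    (F : Forest R → ForestMod K R) :
    ((splits Y).map fun q => lcons (MextF Mh [] q.1) (F q.2)).sum =
      match Y with
      | [] => 0
      | s :: Y' => Finsupp.mapDomain (List.cons s) (F Y') := by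
  cases Y with
  | nil => simp [splits_nil, MextF, lcons_zero]
  | cons s Y =>
    cases Y with
    | nil => simp [splits_nil, splits_cons, MextF, lcons_zero, lcons_single]
    | cons s' Y =>
      simp [splits_cons, MextF, lcons_zero, lcons_single, Function.comp_def]

theorem left_two (Mh : PTree R → Forest R → TreeMod K R) (a b : PTree R) (X : Forest R) (q) :
    MextF Mh (a :: b :: X) q = 0 := rfl

theorem left_one (Mh : PTree R → Forest R → TreeMod K R) (a : PTree R) (q) :
    MextF Mh [a] q = Mh a q := rfl

theorem sum_splits_left (Mh : PTree R → Forest R → TreeMod K R) (t : PTree R) (X Y : Forest R)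
    (F : Forest R → Forest R → ForestMod K R) :
    ((splits (t :: X)).map fun p => ((splits Y).map fun q =>
      lcons (MextF Mh p.1 q.1) (F p.2 q.2)).sum).sum =
    ((splits Y).map fun q => lcons (MextF Mh [] q.1) (F (t :: X) q.2)).sum +
    ((splits Y).map fun q => lcons (Mh t q.1) (F X q.2)).sum := by
  cases X with
  | nil => simp [splits_nil, splits_cons, left_one]
  | cons s X => simp [splits_cons, left_one, left_two, lcons_zero, Function.comp_def]

theorem graftF_cons_rec (t : PTree R) (X Y : Forest R) :
    sg K (graftF (t :: X) Y) =
      (match Y with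
      | [] => 0
      | s :: Y' => Finsupp.mapDomain (List.cons s) (sg K (graftF (t :: X) Y'))) +
      ((splits Y).map fun q => lcons (sg K (graftT t q.1)) (sg K (graftF X q.2))).sum := by
  simp only [lcons_sg]
  cases Y with
  | nil => simp [graftF, splits_nil, sg]
  | cons s Y =>
    simp only [mapDomain_sg]
    rw [graftF, splits_cons, List.flatMap_cons, add_comm]
    have happ : ∀ l m : List (Forest R), sg K (l ++ m) = sg K l + sg K m := by
      intro l m; simp [sg]
    rw [happ]
    congr 1
    · simp only [sg_flatMap, ← splits_cons, List.nil_append]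
    · rw [graftF]
      simp only [List.map_flatMap, List.flatMap_map, List.map_map, Function.comp_def,
        List.cons_append]

theorem Tn_eq (Mh : PTree R → Forest R → TreeMod K R) (n : ℕ) : ∀ (X Y : Forest R),
    (∀ t ∈ X, ∀ Y, Mh t Y = sg K (graftT t Y)) → X.length + Y.length < n →
    Tn Mh n X Y = sg K (graftF X Y) := by
  induction n with
  | zero => intro X Y _ h; omega
  | succ n ih =>
    intro X Y hX hn
    rw [Tn_succ, Sk_zero]
    cases X with
    | nil =>
      rw [splits_nil]
      simp only [List.map_cons, List.map_nil, List.sum_cons, List.sum_nil, add_zero]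
      rw [left_nil Mh Y (fun q => Tn Mh n [] q)]
      cases Y with
      | nil => simp [graftF, sg]
      | cons s Y =>
        simp only [List.length_cons] at hn
        simp only [ih [] Y (by simp) (by simp at hn ⊢; omega)]
        simp [graftF, sg]
    | cons t X =>
      rw [sum_splits_left Mh t X Y (fun p q => Tn Mh n p q),
        left_nil Mh Y (fun q => Tn Mh n (t :: X) q), graftF_cons_rec]
      simp only [List.length_cons] at hn
      simp only [reduceCtorEq, false_and, if_false, zero_add]
      congr 1
      · cases Y with
        | nil => rfl
        | cons s Y =>
          simp only [List.length_cons] at hn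
          simp only [ih (t :: X) Y hX (by simp; omega)]
      · congr 1
        refine List.map_congr_left fun q hq => ?_
        have := splits_len _ _ hq
        rw [hX t (by simp), ih X q.2 (fun t ht => hX t (by simp [ht])) (by omega)]

theorem Mh_eq (Mh : PTree R → Forest R → TreeMod K R)
    (star : Forest R → Forest R → ForestMod K R) (h : IsTreeBrace Mh star) :
    ∀ (t : PTree R) (Y : Forest R), Mh t Y = sg K (graftT t Y)
  | PTree.node x cs, Y => by
    have hc : ∀ t ∈ cs, ∀ Y, Mh t Y = sg K (graftT t Y) := fun t ht Y => Mh_eq Mh star h t Y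
    have := h.1 x cs Y
    rw [h.2, starRHS_eq, Tn_eq Mh _ cs Y hc (by omega), mapDomain_sg] at this
    rw [graftT]
    exact this

/-- Let `R` be a `K`-vector space, `M` the recursive brace
operation on decorated trees, and `⋆` the induced Loday–Ronco product on decorated
forests.  For all decorated forests `f₁, f₂`, the product `f₁ ⋆ f₂` equals the sum
of all forests obtained by choosing, for each tree of `f₂`, either to insert it
among the trees of `f₁` (shuffle) or to graft it onto a vertex of a tree of `f₁`,
in all possible ways preserving the left-to-right order of the trees of `f₂`
among themselves and the left-to-right order of the trees of `f₁`. -/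
theorem tree_star_is_shuffle_grafting
    (Mh : PTree R → Forest R → TreeMod K R)
    (star : Forest R → Forest R → ForestMod K R)
    (h : IsTreeBrace Mh star) :
    ∀ f₁ f₂ : Forest R,
      star f₁ f₂ = ((graftF f₁ f₂).map fun g => Finsupp.single g (1 : K)).sum := by
  intro f₁ f₂
  rw [h.2, starRHS_eq, Tn_eq Mh _ f₁ f₂ (fun t _ Y => Mh_eq Mh star h t Y) (by omega)]
  rfl

end
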